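/- arXiv:2411.02007 — 6 statements merged into one kernel-verified Lean document; each statement's English description precedes it below -/
import Mathlib

section
/- Let T > 0, let g : ℝ → ℝ be continuous, and let y, b : ℝ → ℝ be differentiable on [0,T] and satisfy y'(t) ≤ g(y(t)) + b'(t) for all t ∈ [0,T]. Suppose there are constants N₀ ≥ 0 and N₁ ≥ 0 such that b(t₂) − b(t₁) ≤ N₀ + N₁(t₂ − t₁) for all 0 ≤ t₁ < t₂ ≤ T, and suppose ζ̄ ∈ ℝ is such that g(ζ) ≤ −N₁ for every ζ ≥ ζ̄. Then y(t) ≤ max{y(0), ζ̄} + N₀ for all t ∈ [0,T]. -/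
open Set

/-! If `y` rises above `M = max (y 0) ζbar`, then after the last time `s` at which `y = M` the
trajectory stays in the region where `g ≤ -N₁`. There `y - b` decreases at rate at least `N₁`, and
this cancels the linear part of the growth of `b`, so that `y t - M ≤ N₀`. -/

section LastCrossing

variable {α δ : Type*}
  [ConditionallyCompleteLinearOrder α] [TopologicalSpace α] [OrderTopology α] [DenselyOrdered α]
  [LinearOrder δ] [TopologicalSpace δ] [OrderClosedTopology δ]

theorem exists_eq_forall_mem_Icc_le {f : α → δ} {a b : α} {c : δ} (hab : a ≤ b)
    (hf : ContinuousOn f (Icc a b)) (ha : f a ≤ c) (hb : c ≤ f b) :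
    ∃ s ∈ Icc a b, f s = c ∧ ∀ u ∈ Icc s b, c ≤ f u := by
  have hcompact : IsCompact (Icc a b ∩ f ⁻¹' {c}) :=
    isCompact_Icc.of_isClosed_subset
      (hf.preimage_isClosed_of_isClosed isClosed_Icc isClosed_singleton) inter_subset_left
  obtain ⟨s, ⟨hs, hsc⟩, hlast⟩ :=
    hcompact.exists_isGreatest (intermediate_value_Icc hab hf ⟨ha, hb⟩)
  refine ⟨s, hs, hsc, fun u hu => ?_⟩
  by_contra! huc
  have hau : a ≤ u := hs.1.trans hu.1
  obtain ⟨v, hv, hvc⟩ :=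
    intermediate_value_Icc hu.2 (hf.mono (Icc_subset_Icc_left hau)) ⟨huc.le, hb⟩
  have hvs : v ≤ s := hlast ⟨⟨hau.trans hv.1, hv.2⟩, hvc⟩
  have huv : u = v := hv.1.antisymm (hvs.trans hu.1)
  exact huc.ne (huv ▸ hvc)

end LastCrossing

theorem image_sub_le_mul_sub_of_deriv_right_le {f f' : ℝ → ℝ} {a b C : ℝ} (hab : a ≤ b)
    (hf : ContinuousOn f (Icc a b)) (hf' : ∀ x ∈ Ico a b, HasDerivWithinAt f (f' x) (Ici x) x)
    (hC : ∀ x ∈ Ico a b, f' x ≤ C) :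
    f b - f a ≤ C * (b - a) := by
  have hline (x : ℝ) : HasDerivAt (fun x => f a + C * (x - a)) C x := by
    simpa using (((hasDerivAt_id x).sub_const a).const_mul C).const_add (f a)
  have hle : f b ≤ f a + C * (b - a) :=
    image_le_of_deriv_right_le_deriv_boundary hf hf' (by simp)
      (HasDerivAt.continuousOn fun x _ => hline x) (fun x _ => (hline x).hasDerivWithinAt) hC
      (right_mem_Icc.mpr hab)
  linarith

theorem zlotnik_inequality_general {a T : ℝ} {g y b y' b' : ℝ → ℝ}
    (hyc : ContinuousOn y (Icc a T)) (hbc : ContinuousOn b (Icc a T))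
    (hy : ∀ t ∈ Ico a T, HasDerivWithinAt y (y' t) (Ici t) t)
    (hb : ∀ t ∈ Ico a T, HasDerivWithinAt b (b' t) (Ici t) t)
    (hineq : ∀ t ∈ Ico a T, y' t ≤ g (y t) + b' t)
    {N₀ N₁ : ℝ} (hN₀ : 0 ≤ N₀)
    (hbN : ∀ t₁ t₂ : ℝ, a ≤ t₁ → t₁ < t₂ → t₂ ≤ T → b t₂ - b t₁ ≤ N₀ + N₁ * (t₂ - t₁))
    {ζbar : ℝ} (hζ : ∀ ζ : ℝ, ζbar ≤ ζ → g ζ ≤ -N₁) :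
    ∀ t ∈ Icc a T, y t ≤ max (y a) ζbar + N₀ := by
  intro t ht
  set M := max (y a) ζbar
  rcases le_total (y t) M with hle | hMt
  · linarith
  obtain ⟨s, hs, hsM, hMle⟩ := exists_eq_forall_mem_Icc_le ht.1
    (hyc.mono (Icc_subset_Icc_right ht.2)) (le_max_left (y a) ζbar) hMt
  rcases hs.2.eq_or_lt with rfl | hst
  · linarith
  have hIcc : Icc s t ⊆ Icc a T := Icc_subset_Icc hs.1 ht.2
  have hIco : Ico s t ⊆ Ico a T := Ico_subset_Ico hs.1 ht.2
  have hdrift : ∀ u ∈ Ico s t, y' u - b' u ≤ -N₁ := fun u hu => by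
    have hζu : ζbar ≤ y u := (le_max_right _ _).trans (hMle u (Ico_subset_Icc_self hu))
    linarith [hineq u (hIco hu), hζ (y u) hζu]
  have hdecay : (y t - b t) - (y s - b s) ≤ -N₁ * (t - s) :=
    image_sub_le_mul_sub_of_deriv_right_le hst.le ((hyc.sub hbc).mono hIcc)
      (fun u hu => (hy u (hIco hu)).sub (hb u (hIco hu))) hdrift
  linarith [hbN s t hs.1 hst ht.2]

/-- Zlotnik-type comparison lemma (Lemma 7.4, differential-inequality version):
if `y' ≤ g(y) + b'` on `[0,T]`, `b(t₂) - b(t₁) ≤ N₀ + N₁ (t₂ - t₁)`, and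
`g(ζ) ≤ -N₁` for all `ζ ≥ ζ̄`, then `y(t) ≤ max (y 0) ζ̄ + N₀` on `[0,T]`. -/
theorem zlotnik_inequality
    (T : ℝ) (hT : 0 < T)
    (g : ℝ → ℝ) (hg : Continuous g)
    (y b y' b' : ℝ → ℝ)
    (hy : ∀ t ∈ Icc (0:ℝ) T, HasDerivAt y (y' t) t)
    (hb : ∀ t ∈ Icc (0:ℝ) T, HasDerivAt b (b' t) t)
    (hineq : ∀ t ∈ Icc (0:ℝ) T, y' t ≤ g (y t) + b' t)
    (N₀ N₁ : ℝ) (hN₀ : 0 ≤ N₀) (hN₁ : 0 ≤ N₁)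
    (hbN : ∀ t₁ t₂ : ℝ, 0 ≤ t₁ → t₁ < t₂ → t₂ ≤ T →
      b t₂ - b t₁ ≤ N₀ + N₁ * (t₂ - t₁))
    (ζbar : ℝ) (hζ : ∀ ζ : ℝ, ζbar ≤ ζ → g ζ ≤ -N₁) :
    ∀ t ∈ Icc (0:ℝ) T, y t ≤ max (y 0) ζbar + N₀ :=
  zlotnik_inequality_general (HasDerivAt.continuousOn hy) (HasDerivAt.continuousOn hb)
    (fun t ht => (hy t (Ico_subset_Icc_self ht)).hasDerivWithinAt)
    (fun t ht => (hb t (Ico_subset_Icc_self ht)).hasDerivWithinAt)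
    (fun t ht => hineq t (Ico_subset_Icc_self ht)) hN₀ hbN hζ
end

section
/- Let R > 0 and let x ∈ ℝ² satisfy 0 < ‖x‖ < R. Define g(y) = log‖x − y‖ − log‖(R/‖x‖)·x − (‖x‖/R)·y‖. Then for every y in the open ball {y : ‖y‖ < R} with y ≠ x, the function g is twice differentiable at y and its Laplacian vanishes there: the sum over i = 1, 2 of the second derivative at t = 0 of the map t ↦ g(y + t·eᵢ) equals 0, where e₁, e₂ is the standard orthonormal basis of ℝ². -/
open Real

/-!
The logarithm of the norm is harmonic off the origin of the plane because `log ‖f‖` is harmonic for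
every nonvanishing holomorphic `f`, and the Laplacian is invariant under isometries, so that any
two-dimensional inner product space may be identified with `ℂ`. Both terms of the Green function
are of the form `log ‖a - c • y‖`. The first is singular at `x`, the second at the inverse point
`x' = (R / ‖x‖)² • x`, because `(R / ‖x‖) • x - (‖x‖ / R) • y = (‖x‖ / R) • (x' - y)`; and inversion
in the boundary circle moves `x` out of the disc.
-/

open InnerProductSpace EuclideanGeometry Module
open scoped Laplacian EuclideanSpace

section Laplacian

variable {E E' F : Type*}
  [NormedAddCommGroup E] [InnerProductSpace ℝ E] [FiniteDimensional ℝ E]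
  [NormedAddCommGroup E'] [InnerProductSpace ℝ E'] [FiniteDimensional ℝ E']
  [NormedAddCommGroup F] [NormedSpace ℝ F]

theorem laplacian_comp_linearIsometryEquiv (f : E' → F) (e : E ≃ₗᵢ[ℝ] E') :
    Δ (f ∘ e) = Δ f ∘ e := by
  ext x
  let b := stdOrthonormalBasis ℝ E
  have iteratedFDeriv_comp : iteratedFDeriv ℝ 2 (f ∘ e) x =
      (iteratedFDeriv ℝ 2 f (e x)).compContinuousLinearMap fun _ ↦ e := by
    simp only [← iteratedFDerivWithin_univ]
    exact e.toContinuousLinearEquiv.iteratedFDerivWithin_comp_right f uniqueDiffOn_univ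
      (Set.mem_univ (e x)) 2
  rw [Function.comp_apply, laplacian_eq_iteratedFDeriv_orthonormalBasis _ b,
    laplacian_eq_iteratedFDeriv_orthonormalBasis _ (b.map e)]
  refine Finset.sum_congr rfl fun i _ ↦ ?_
  rw [iteratedFDeriv_comp, ContinuousMultilinearMap.compContinuousLinearMap_apply]
  congr 1
  ext j
  fin_cases j <;> rfl

theorem harmonicAt_comp_linearIsometryEquiv {f : E' → F} (e : E ≃ₗᵢ[ℝ] E') {x : E}
    (hf : HarmonicAt f (e x)) : HarmonicAt (f ∘ e) x := by
  refine ⟨hf.1.comp x e.contDiff.contDiffAt, ?_⟩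
  rw [laplacian_comp_linearIsometryEquiv]
  exact e.continuous.continuousAt.eventually hf.2

end Laplacian

theorem iteratedDeriv_two_comp_line {𝕜 E F : Type*} [NontriviallyNormedField 𝕜]
    [NormedAddCommGroup E] [NormedSpace 𝕜 E] [NormedAddCommGroup F] [NormedSpace 𝕜 F]
    {f : E → F} {y : E} (hf : ContDiffAt 𝕜 2 f y) (v : E) :
    iteratedDeriv 2 (fun t : 𝕜 ↦ f (y + t • v)) 0 = iteratedFDeriv 𝕜 2 f y ![v, v] := by
  let line : 𝕜 → E := fun t ↦ y + t • v
  have line_zero : line 0 = y := by simp [line]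
  have deriv_line : deriv line = fun _ ↦ v := by
    ext t
    exact (((hasDerivAt_id t).smul_const v).const_add y).deriv.trans (one_smul 𝕜 v)
  have deriv_deriv_line : iteratedDeriv 2 line 0 = 0 := by
    simp [iteratedDeriv_succ, deriv_line]
  have second_order_chain_rule := iteratedDeriv_vcomp_two (g := f) (f := line) (x := 0)
    (by rwa [line_zero]) (by fun_prop)
  rw [line_zero, deriv_deriv_line, map_zero, add_zero, deriv_line] at second_order_chain_rule
  refine second_order_chain_rule.trans (congrArg _ ?_)
  ext j
  fin_cases j <;> rfl

theorem laplacian_eq_sum_iteratedDeriv {ι E F : Type*} [Fintype ι]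
    [NormedAddCommGroup E] [InnerProductSpace ℝ E] [FiniteDimensional ℝ E]
    [NormedAddCommGroup F] [NormedSpace ℝ F] {f : E → F} {y : E}
    (hf : ContDiffAt ℝ 2 f y) (b : OrthonormalBasis ι ℝ E) :
    Δ f y = ∑ i, iteratedDeriv 2 (fun t : ℝ ↦ f (y + t • b i)) 0 := by
  simp only [laplacian_eq_iteratedFDeriv_orthonormalBasis f b, iteratedDeriv_two_comp_line hf]

section Inversion

variable {V P : Type*} [NormedAddCommGroup V] [InnerProductSpace ℝ V]

theorem le_dist_inversion_center [MetricSpace P] [NormedAddTorsor V P] {c x : P} {R : ℝ}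
    (hx : x ≠ c) (hxR : dist x c ≤ R) : R ≤ dist (inversion c R x) c := by
  have hx_pos : 0 < dist x c := dist_pos.2 hx
  rw [dist_inversion_center, le_div_iff₀ hx_pos, sq]
  exact mul_le_mul_of_nonneg_left hxR (hx_pos.le.trans hxR)

theorem ne_inversion_of_dist_center_lt [MetricSpace P] [NormedAddTorsor V P] {c x y : P} {R : ℝ}
    (hx : x ≠ c) (hxR : dist x c ≤ R) (hyR : dist y c < R) : y ≠ inversion c R x :=
  ne_of_apply_ne (dist · c) (hyR.trans_le (le_dist_inversion_center hx hxR)).ne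

theorem smul_inversion_zero_sub (R : ℝ) (x y : V) :
    (‖x‖ / R) • (inversion 0 R x - y) = (R / ‖x‖) • x - (‖x‖ / R) • y := by
  have scalar_eq : ‖x‖ / R * (R / ‖x‖) ^ 2 = R / ‖x‖ := by
    rw [← inv_div R ‖x‖, sq, ← mul_assoc, inv_mul_mul_self]
  rw [smul_sub, inversion, dist_zero_right, vsub_eq_sub, sub_zero, vadd_eq_add, add_zero,
    smul_smul, scalar_eq]

end Inversion

section TwoDim

variable {E : Type*} [NormedAddCommGroup E] [InnerProductSpace ℝ E] [Fact (finrank ℝ E = 2)]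

attribute [local instance] FiniteDimensional.of_fact_finrank_eq_two

theorem harmonicAt_log_norm_sub_smul {a y : E} {c : ℝ} (h : a - c • y ≠ 0) :
    HarmonicAt (fun z ↦ log ‖a - c • z‖) y := by
  let e : E ≃ₗᵢ[ℝ] ℂ :=
    (stdOrthonormalBasis ℝ E).equiv Complex.orthonormalBasisOneI (finCongr Fact.out)
  have map_affine (z : E) : e (a - c • z) = e a - c * e z := by
    rw [map_sub, map_smul, Complex.real_smul]
  have harmonic_on_complex : HarmonicAt (fun w : ℂ ↦ log ‖e a - c * w‖) (e y) := by
    refine AnalyticAt.harmonicAt_log_norm (by fun_prop) ?_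
    rwa [← map_affine, e.map_eq_zero_iff.ne]
  have comp_eq : (fun w : ℂ ↦ log ‖e a - c * w‖) ∘ e = fun z ↦ log ‖a - c • z‖ := by
    ext z
    rw [Function.comp_apply, ← map_affine, e.norm_map]
  exact comp_eq ▸ harmonicAt_comp_linearIsometryEquiv e harmonic_on_complex

theorem green_function_disc_harmonic_general {R : ℝ} (hR : R ≠ 0) {x y : E} (hx : x ≠ 0)
    (hyx : y ≠ x) (hy : y ≠ inversion 0 R x) :
    HarmonicAt (fun z ↦ log ‖x - z‖ - log ‖(R / ‖x‖) • x - (‖x‖ / R) • z‖) y := by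
  have harmonic_source : HarmonicAt (fun z ↦ log ‖x - z‖) y := by
    simpa only [one_smul] using
      harmonicAt_log_norm_sub_smul (c := 1) (by simpa only [one_smul] using sub_ne_zero.2 hyx.symm)
  have reflected_ne_zero : (R / ‖x‖) • x - (‖x‖ / R) • y ≠ 0 := by
    rw [← smul_inversion_zero_sub]
    exact smul_ne_zero (div_ne_zero (norm_ne_zero_iff.2 hx) hR) (sub_ne_zero.2 hy.symm)
  exact harmonic_source.sub (harmonicAt_log_norm_sub_smul reflected_ne_zero)

end TwoDim

/-- Harmonicity of the Green function of the disc off the singularity: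
for `0 < ‖x‖ < R`, the function
`g(y) = log‖x − y‖ − log‖(R/‖x‖)x − (‖x‖/R)y‖` is twice differentiable at every
`y` in the open disc `‖y‖ < R` with `y ≠ x`, and its Laplacian there vanishes. -/
theorem green_function_disc_harmonic
    (R : ℝ) (hR : 0 < R) (x : EuclideanSpace ℝ (Fin 2))
    (hx0 : 0 < ‖x‖) (hxR : ‖x‖ < R) :
    ∀ y : EuclideanSpace ℝ (Fin 2), ‖y‖ < R → y ≠ x →
      ContDiffAt ℝ 2
        (fun y' : EuclideanSpace ℝ (Fin 2) =>
          Real.log ‖x - y'‖ - Real.log ‖(R / ‖x‖) • x - (‖x‖ / R) • y'‖) y ∧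
      ∑ i : Fin 2,
        iteratedDeriv 2
          (fun t : ℝ =>
            Real.log ‖x - (y + t • EuclideanSpace.single i (1:ℝ))‖ -
              Real.log ‖(R / ‖x‖) • x -
                (‖x‖ / R) • (y + t • EuclideanSpace.single i (1:ℝ))‖) 0 = 0 := by
  intro y hyR hyx
  have hx : x ≠ 0 := norm_pos_iff.1 hx0
  have hy : y ≠ inversion 0 R x := ne_inversion_of_dist_center_lt hx
    (by simpa only [dist_zero_right] using hxR.le) (by simpa only [dist_zero_right] using hyR)
  have harmonic := green_function_disc_harmonic_general hR.ne' hx hyx hy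
  have laplacian_eq_sum :=
    laplacian_eq_sum_iteratedDeriv harmonic.1 (EuclideanSpace.basisFun (Fin 2) ℝ)
  simp only [EuclideanSpace.basisFun_apply] at laplacian_eq_sum
  exact ⟨harmonic.1, laplacian_eq_sum.symm.trans harmonic.2.self_of_nhds⟩
end

section
/- Let n ≥ 3 be an integer, let c > 0 and R > 0, let x ∈ ℝⁿ satisfy 0 < ‖x‖ < R, and let y ∈ ℝⁿ satisfy ‖y‖ = R. Define G(x,y') = (1/((2−n)c))(‖x − y'‖^{2−n} − ‖(R/‖x‖)·x − (‖x‖/R)·y'‖^{2−n}). Then the map y' ↦ G(x,y') is differentiable at y and its Fréchet derivative at y applied to the outward unit normal vector y/R equals (R² − ‖x‖²)/(cR‖x − y‖ⁿ). -/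
open Real

/-!
On the sphere `‖y‖ = R`, the reflection identity `‖(R / ‖x‖) • x - (‖x‖ / R) • y‖ = ‖x - y‖` gives
the gradients in `y` of the two powers in the Green function a common radial factor. It multiplies
`y - x` in the first gradient and `(‖x‖ ^ 2 / R ^ 2) • y - x` in the second. In the difference the
`x`-components cancel, so the gradient is a multiple of `y`, as it must be because the Green
function vanishes on the sphere.
-/

section

variable {E : Type*} [NormedAddCommGroup E] [InnerProductSpace ℝ E]

/-- The Green function, with pole `x`, of the ball of radius `R` centred at the origin. The
dimension is a real parameter `n`, and `c` normalizes the fundamental solution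
`‖·‖ ^ (2 - n) / ((2 - n) * c)`; classically `c = n * ω`, with `ω` the volume of the unit ball. -/
noncomputable def ballGreen (n c R : ℝ) (x y : E) : ℝ :=
  (1 / ((2 - n) * c)) *
    (‖x - y‖ ^ (2 - n) - ‖(R / ‖x‖) • x - (‖x‖ / R) • y‖ ^ (2 - n))

lemma norm_norm_div_norm_smul_sub_smul {x y : E} (hx : x ≠ 0) (hy : y ≠ 0) :
    ‖(‖y‖ / ‖x‖) • x - (‖x‖ / ‖y‖) • y‖ = ‖x - y‖ := by
  have hx' : ‖x‖ ≠ 0 := norm_ne_zero_iff.mpr hx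
  have hy' : ‖y‖ ≠ 0 := norm_ne_zero_iff.mpr hy
  rw [← sq_eq_sq₀ (norm_nonneg _) (norm_nonneg _), norm_sub_sq_real, norm_sub_sq_real,
    norm_smul, norm_smul, real_inner_smul_left, real_inner_smul_right]
  simp only [norm_div, norm_norm]
  field_simp
  ring

lemma hasFDerivAt_norm_rpow_of_ne_zero {x : E} (hx : x ≠ 0) (p : ℝ) :
    HasFDerivAt (fun y : E ↦ ‖y‖ ^ p) ((p * ‖x‖ ^ (p - 2)) • innerSL ℝ x) x := by
  have sq_rpow_half (y : E) (q : ℝ) : (‖y‖ ^ 2) ^ (q / 2) = ‖y‖ ^ q := by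
    rw [← rpow_natCast_mul (norm_nonneg y), Nat.cast_ofNat, mul_div_cancel₀ q two_ne_zero]
  have h := (hasStrictFDerivAt_norm_sq x).hasFDerivAt.rpow_const (p := p / 2)
    (Or.inl (pow_ne_zero 2 (norm_ne_zero_iff.mpr hx)))
  simp only [sq_rpow_half] at h
  convert! h using 1
  rw [← sq_rpow_half x (p - 2), sub_div, div_self two_ne_zero]
  module

lemma hasFDerivAt_norm_sub_smul_rpow {a y : E} {k : ℝ} (h : a - k • y ≠ 0) (p : ℝ) :
    HasFDerivAt (fun z : E ↦ ‖a - k • z‖ ^ p)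
      ((p * ‖a - k • y‖ ^ (p - 2) * k) • innerSL ℝ (k • y - a)) y := by
  have h_affine : HasFDerivAt (fun z : E ↦ a - k • z) (-(k • ContinuousLinearMap.id ℝ E)) y :=
    ((hasFDerivAt_id y).const_smul k).const_sub a
  convert! (hasFDerivAt_norm_rpow_of_ne_zero h p).comp y h_affine using 1
  ext v
  simp
  ring

lemma hasFDerivAt_ballGreen {n c R : ℝ} (hn : n ≠ 2) (hc : c ≠ 0) (hR : 0 < R) {x y : E}
    (hx : x ≠ 0) (hxy : x ≠ y) (hy : ‖y‖ = R) :
    HasFDerivAt (ballGreen n c R x)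
      (((R ^ 2 - ‖x‖ ^ 2) / (c * R ^ 2 * ‖x - y‖ ^ n)) • innerSL ℝ y) y := by
  have h_sub : x - y ≠ 0 := sub_ne_zero.mpr hxy
  have h_reflection : ‖(R / ‖x‖) • x - (‖x‖ / R) • y‖ = ‖x - y‖ := by
    have hy₀ : y ≠ 0 := norm_pos_iff.mp (hy ▸ hR)
    simpa only [hy] using norm_norm_div_norm_smul_sub_smul hx hy₀
  have h_reflection_ne : (R / ‖x‖) • x - (‖x‖ / R) • y ≠ 0 :=
    norm_ne_zero_iff.mp (h_reflection.trans_ne (norm_ne_zero_iff.mpr h_sub))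
  have h_direct : HasFDerivAt (fun z : E ↦ ‖x - z‖ ^ (2 - n))
      (((2 - n) * ‖x - y‖ ^ (2 - n - 2)) • innerSL ℝ (y - x)) y := by
    simpa only [one_smul, mul_one] using
      hasFDerivAt_norm_sub_smul_rpow (k := 1) (by rwa [one_smul]) (2 - n)
  have h_image := hasFDerivAt_norm_sub_smul_rpow h_reflection_ne (2 - n)
  have h_radial : ‖x - y‖ ^ (2 - n - 2) = (‖x - y‖ ^ n)⁻¹ := by
    rw [← rpow_neg (norm_nonneg _), sub_sub_cancel_left]
  have hx' : ‖x‖ ≠ 0 := norm_ne_zero_iff.mpr hx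
  have hn' : 2 - n ≠ 0 := sub_ne_zero.mpr hn.symm
  convert! (h_direct.sub h_image).const_mul (1 / ((2 - n) * c)) using 1
  rw [h_reflection, h_radial]
  ext v
  simp only [smul_apply, sub_apply, map_sub, map_smul, innerSL_apply_apply, smul_eq_mul]
  field_simp
  ring

theorem green_function_ball_normal_derivative_general {n c R : ℝ} (hn : n ≠ 2) (hc : c ≠ 0)
    (hR : 0 < R) {x y : E} (hx : x ≠ 0) (hxy : x ≠ y) (hy : ‖y‖ = R) :
    DifferentiableAt ℝ (fun y' ↦ ballGreen n c R x y') y ∧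
      fderiv ℝ (fun y' ↦ ballGreen n c R x y') y ((1 / R) • y) =
        (R ^ 2 - ‖x‖ ^ 2) / (c * R * ‖x - y‖ ^ n) := by
  have h_deriv := hasFDerivAt_ballGreen hn hc hR hx hxy hy
  refine ⟨h_deriv.differentiableAt, ?_⟩
  rw [h_deriv.fderiv, smul_apply, map_smul, innerSL_apply_apply, real_inner_self_eq_norm_sq, hy,
    smul_eq_mul, smul_eq_mul]
  field_simp

end

/-- Outward normal derivative (Poisson kernel) formula for the Green function of the
`n`-dimensional ball `B(0,R)`, `n ≥ 3`:
`G(x,y') = (1/((2−n)c))(‖x − y'‖^{2−n} − ‖(R/‖x‖)x − (‖x‖/R)y'‖^{2−n})`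
has normal derivative `(R² − ‖x‖²)/(cR‖x − y‖ⁿ)` at boundary points `‖y‖ = R`. -/
theorem green_function_ball_normal_derivative
    (n : ℕ) (hn : 3 ≤ n) (c R : ℝ) (hc : 0 < c) (hR : 0 < R)
    (x y : EuclideanSpace ℝ (Fin n))
    (hx0 : 0 < ‖x‖) (hxR : ‖x‖ < R) (hy : ‖y‖ = R) :
    DifferentiableAt ℝ
      (fun y' : EuclideanSpace ℝ (Fin n) =>
        (1 / (((2:ℝ) - n) * c)) *
          (‖x - y'‖ ^ ((2:ℝ) - n) -
            ‖(R / ‖x‖) • x - (‖x‖ / R) • y'‖ ^ ((2:ℝ) - n))) y ∧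
    fderiv ℝ
      (fun y' : EuclideanSpace ℝ (Fin n) =>
        (1 / (((2:ℝ) - n) * c)) *
          (‖x - y'‖ ^ ((2:ℝ) - n) -
            ‖(R / ‖x‖) • x - (‖x‖ / R) • y'‖ ^ ((2:ℝ) - n))) y
        ((1 / R) • y)
      = (R ^ 2 - ‖x‖ ^ 2) / (c * R * ‖x - y‖ ^ n) := by
  have hn' : (n : ℝ) ≠ 2 := by exact_mod_cast (show n ≠ 2 by lia)
  have hxy : x ≠ y := ne_of_apply_ne norm (hxR.trans_eq hy.symm).ne
  simpa only [ballGreen, rpow_natCast] using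
    green_function_ball_normal_derivative_general hn' hc.ne' hR (norm_pos_iff.mp hx0) hxy hy
end

section
/- Let R > 0, let y ∈ ℝ² satisfy ‖y‖ = R, and let x ∈ ℝ² with x ≠ y. Define the Poisson kernel P(x') = (R² − ‖x'‖²)/(2πR‖x' − y‖²). Then the inner product of the vector y − x with the gradient at x of the map x' ↦ P(x') equals 1/(2πR) + P(x); explicitly, ⟪y − x, ∇P(x)⟫ = 1/(2πR) + (R² − ‖x‖²)/(2πR‖x − y‖²). -/
open Real
open scoped RealInnerProductSpace

/-!
Write `P = κ u / v` with `u z = ‖y‖² - ‖z‖²` and `v z = ‖z - y‖ ^ p`. In the direction `y - x`,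
polarization gives `u' = ‖x - y‖² - u`, while `v' = -p v` because `v` is homogeneous of degree `p`
about `y`. The quotient rule then yields `P' = κ ‖x - y‖ ^ (2 - p) + (p - 1) P`; the planar Poisson
kernel is the case `p = 2`, `κ = 1 / (2πR)`.
-/

section NormedSpace

variable {E : Type*} [NormedAddCommGroup E]

/-- The Poisson kernel of the ball centred at `0`, with pole `y` on its boundary sphere, so that the
radius is `‖y‖`. The exponent `p` plays the role of the dimension `n` and `κ` that of the
normalization `1 / (n ω_n ‖y‖)`; both are free, as the radial identity does not relate them. -/
noncomputable def ballPoissonKernel (κ p : ℝ) (y x : E) : ℝ :=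
  κ * ((‖y‖ ^ 2 - ‖x‖ ^ 2) / ‖x - y‖ ^ p)

theorem ballPoissonKernel_one_div_two (c : ℝ) (y : E) :
    ballPoissonKernel (1 / c) 2 y = fun x => (‖y‖ ^ 2 - ‖x‖ ^ 2) / (c * ‖x - y‖ ^ 2) := by
  funext x
  rw [ballPoissonKernel, rpow_two, div_mul_div_comm, one_mul]

theorem hasLineDerivAt_norm_sub_rpow [NormedSpace ℝ E] (p : ℝ) (x y : E) :
    HasLineDerivAt ℝ (fun z => ‖z - y‖ ^ p) (-p * ‖x - y‖ ^ p) x (y - x) := by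
  have norm_on_line (t : ℝ) : ‖x + t • (y - x) - y‖ = |1 - t| * ‖x - y‖ := by
    rw [← Real.norm_eq_abs, ← norm_smul]
    congr 1
    module
  have rpow_near_zero : (fun t : ℝ => ‖x + t • (y - x) - y‖ ^ p) =ᶠ[nhds 0]
      fun t => (1 - t) ^ p * ‖x - y‖ ^ p := by
    filter_upwards [gt_mem_nhds one_pos] with t ht
    rw [norm_on_line, abs_of_pos (sub_pos.2 ht),
      mul_rpow (sub_pos.2 ht).le (norm_nonneg _)]
  have deriv_scale : HasDerivAt (fun t : ℝ => (1 - t) ^ p) (-p) 0 := by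
    simpa using ((hasDerivAt_id (0 : ℝ)).const_sub 1).rpow_const (p := p) (by simp)
  exact (deriv_scale.mul_const _).congr_of_eventuallyEq rpow_near_zero

end NormedSpace

section InnerProductSpace

variable {E : Type*} [NormedAddCommGroup E] [InnerProductSpace ℝ E]

theorem hasLineDerivAt_norm_sq_sub_norm_sq (x y : E) :
    HasLineDerivAt ℝ (fun z => ‖y‖ ^ 2 - ‖z‖ ^ 2)
      (‖x - y‖ ^ 2 - (‖y‖ ^ 2 - ‖x‖ ^ 2)) x (y - x) := by
  have polarization : ‖y‖ ^ 2 = ‖x‖ ^ 2 + 2 * ⟪x, y - x⟫ + ‖x - y‖ ^ 2 := by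
    simpa [norm_sub_rev] using norm_add_sq_real x (y - x)
  have fderiv_norm_sq := (hasStrictFDerivAt_norm_sq x).hasFDerivAt.const_sub (‖y‖ ^ 2)
  convert fderiv_norm_sq.hasLineDerivAt (y - x) using 1
  simp only [neg_apply, smul_apply, innerSL_apply_apply, nsmul_eq_mul, Nat.cast_ofNat]
  linarith

theorem hasLineDerivAt_ballPoissonKernel (κ p : ℝ) {x y : E} (hxy : x ≠ y) :
    HasLineDerivAt ℝ (ballPoissonKernel κ p y)
      (κ * ‖x - y‖ ^ (2 - p) + (p - 1) * ballPoissonKernel κ p y x) x (y - x) := by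
  have norm_pos : 0 < ‖x - y‖ := norm_pos_iff.2 (sub_ne_zero.2 hxy)
  have rpow_ne : ‖x - y‖ ^ p ≠ 0 := (rpow_pos_of_pos norm_pos p).ne'
  have quotient_rule := ((hasLineDerivAt_norm_sq_sub_norm_sq x y).fun_div
    (hasLineDerivAt_norm_sub_rpow p x y) (by simpa using rpow_ne)).const_mul κ
  suffices value : κ * ‖x - y‖ ^ (2 - p) + (p - 1) * ballPoissonKernel κ p y x =
      κ * (((‖x - y‖ ^ 2 - (‖y‖ ^ 2 - ‖x‖ ^ 2)) * ‖x - y‖ ^ p -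
        (‖y‖ ^ 2 - ‖x‖ ^ 2) * (-p * ‖x - y‖ ^ p)) / (‖x - y‖ ^ p) ^ 2) by
    rw [value]
    simpa only [HasLineDerivAt, ballPoissonKernel, zero_smul, add_zero] using quotient_rule
  rw [ballPoissonKernel, rpow_sub norm_pos, rpow_two]
  field_simp
  ring

theorem differentiableAt_ballPoissonKernel (κ p : ℝ) {x y : E} (hxy : x ≠ y) :
    DifferentiableAt ℝ (ballPoissonKernel κ p y) x := by
  have norm_pos : 0 < ‖x - y‖ := norm_pos_iff.2 (sub_ne_zero.2 hxy)
  have numerator : DifferentiableAt ℝ (fun z : E => ‖y‖ ^ 2 - ‖z‖ ^ 2) x :=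
    (differentiableAt_id.norm_sq ℝ).const_sub _
  have denominator : DifferentiableAt ℝ (fun z : E => ‖z - y‖ ^ p) x :=
    ((differentiableAt_id.sub_const y).norm ℝ (sub_ne_zero.2 hxy)).rpow_const (.inl norm_pos.ne')
  unfold ballPoissonKernel
  fun_prop (disch := exact (rpow_pos_of_pos norm_pos p).ne')

theorem poisson_kernel_radial_identity_general [CompleteSpace E] (κ p : ℝ) {x y : E}
    (hxy : x ≠ y) :
    ⟪y - x, gradient (ballPoissonKernel κ p y) x⟫ =
      κ * ‖x - y‖ ^ (2 - p) + (p - 1) * ballPoissonKernel κ p y x := by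
  rw [inner_gradient_right, conj_trivial,
    ← (differentiableAt_ballPoissonKernel κ p hxy).lineDeriv_eq_fderiv]
  exact (hasLineDerivAt_ballPoissonKernel κ p hxy).lineDeriv

end InnerProductSpace

/-- Key geometric boundary identity on the disc (the case `n = 2`):
`⟪y − x, ∇P(x)⟫ = 1/(2πR) + P(x)` for the Poisson kernel
`P(x') = (R² − ‖x'‖²)/(2πR‖x' − y‖²)` with `‖y‖ = R`. -/
theorem poisson_kernel_radial_identity
    (R : ℝ) (hR : 0 < R) (y : EuclideanSpace ℝ (Fin 2)) (hy : ‖y‖ = R)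
    (x : EuclideanSpace ℝ (Fin 2)) (hxy : x ≠ y) :
    ⟪y - x,
      gradient
        (fun x' : EuclideanSpace ℝ (Fin 2) =>
          (R ^ 2 - ‖x'‖ ^ 2) / (2 * π * R * ‖x' - y‖ ^ 2)) x⟫
      = 1 / (2 * π * R) + (R ^ 2 - ‖x‖ ^ 2) / (2 * π * R * ‖x - y‖ ^ 2) := by
  subst hy
  simpa only [ballPoissonKernel_one_div_two, sub_self, rpow_zero, mul_one, one_mul,
    show (2 : ℝ) - 1 = 1 by norm_num] using
    poisson_kernel_radial_identity_general (1 / (2 * π * ‖y‖)) 2 hxy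
end

section
/- Let Ω be the open unit disc in ℝ² with Lebesgue measure, let γ > 1, ρ̄ > 0, M ≥ ρ̄ and q ∈ [2,6]. Define G(ρ) = (ρ^γ − ρ ρ̄^{γ−1})/(γ−1) + (ρ̄ − ρ)·ρ̄^{γ−1} for ρ ≥ 0. Then there exists a constant C > 0, depending only on γ, ρ̄, M and q, such that for every measurable function ρ : Ω → ℝ with 0 ≤ ρ(x) ≤ M for almost every x ∈ Ω and with E := ∫_Ω G(ρ(x)) dx ≤ 1, one has (∫_Ω |ρ(x)^γ − ρ̄^γ|^q dx)^{1/q} ≤ C·E^{1/(qγ)}. -/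
open MeasureTheory

/-!
As a function of the pressure `p = ρ ^ γ`, the energy density is `γ / (γ - 1) * ρbar ^ (γ - 1)`
times the gap between the concave function `p ↦ p ^ (1 / γ)` and its tangent line at `ρbar ^ γ`.
On a bounded interval of pressures this function is strongly concave, so the energy density
dominates the squared pressure deviation. For `q ≥ 2` the remaining power `q - 2` of the deviation
is bounded, which gives an `L^q` bound with the exponent `1 / q` of the energy; for energies at most
one this is better than the exponent `1 / (q * γ)`.
-/

open Real Set

theorem strongConcaveOn_rpow_Icc {α B : ℝ} (hα₀ : 0 ≤ α) (hα₁ : α ≤ 1) :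
    StrongConcaveOn (Icc 0 B) (α * (1 - α) * B ^ (α - 2)) fun x ↦ x ^ α := by
  rw [strongConcaveOn_iff_convex]
  simp only [norm_eq_abs, sq_abs]
  set m := α * (1 - α) * B ^ (α - 2)
  have hcont : Continuous fun x : ℝ ↦ x ^ α + m / 2 * x ^ 2 :=
    (continuous_rpow_const hα₀).add (by fun_prop)
  refine concaveOn_of_hasDerivWithinAt2_nonpos
    (f' := fun x ↦ α * x ^ (α - 1) + m * x) (f'' := fun x ↦ α * ((α - 1) * x ^ (α - 2)) + m)
    (convex_Icc 0 B) hcont.continuousOn ?_ ?_ ?_ <;>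
    simp only [interior_Icc] <;> intro x hx
  · have hpow : HasDerivAt (fun y : ℝ ↦ y ^ α) (α * x ^ (α - 1)) x :=
      hasDerivAt_rpow_const (.inl hx.1.ne')
    have hsq : HasDerivAt (fun y : ℝ ↦ m / 2 * y ^ 2) (m * x) x :=
      ((hasDerivAt_pow 2 x).const_mul (m / 2)).congr_deriv (by push_cast; ring)
    exact (hpow.add hsq).hasDerivWithinAt
  · have hpow : HasDerivAt (fun y : ℝ ↦ y ^ (α - 1)) ((α - 1) * x ^ (α - 2)) x :=
      (hasDerivAt_rpow_const (.inl hx.1.ne')).congr_deriv (by ring_nf)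
    have hlin : HasDerivAt (fun y : ℝ ↦ m * y) m x := by
      simpa using (hasDerivAt_id x).const_mul m
    exact ((hpow.const_mul α).add hlin).hasDerivWithinAt
  · have hB : B ^ (α - 2) ≤ x ^ (α - 2) :=
      rpow_le_rpow_of_nonpos hx.1 hx.2.le (by linarith)
    have hα : 0 ≤ α * (1 - α) := mul_nonneg hα₀ (by linarith)
    linarith [mul_le_mul_of_nonneg_left hB hα]

theorem concaveOn_le_tangent {s : Set ℝ} {f : ℝ → ℝ} {f' x y : ℝ} (hf : ConcaveOn ℝ s f)
    (hx : x ∈ s) (hy : y ∈ s) (hfy : HasDerivWithinAt f f' s y) :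
    f x ≤ f y + f' * (x - y) := by
  rcases lt_trichotomy x y with hxy | rfl | hxy
  · have hslope := hf.le_slope_of_hasDerivWithinAt hx hy hxy hfy
    rw [slope_def_field, le_div_iff₀ (sub_pos.2 hxy)] at hslope
    linarith
  · simp
  · have hslope := hf.slope_le_of_hasDerivWithinAt hy hx hxy hfy
    rw [slope_def_field, div_le_iff₀ (sub_pos.2 hxy)] at hslope
    linarith

theorem strongConcaveOn_le_tangent {s : Set ℝ} {f : ℝ → ℝ} {m f' x y : ℝ}
    (hf : StrongConcaveOn s m f) (hx : x ∈ s) (hy : y ∈ s) (hfy : HasDerivWithinAt f f' s y) :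
    f x ≤ f y + f' * (x - y) - m / 2 * (x - y) ^ 2 := by
  have hconc := strongConcaveOn_iff_convex.1 hf
  simp only [norm_eq_abs, sq_abs] at hconc
  have hsq : HasDerivWithinAt (fun z : ℝ ↦ m / 2 * z ^ 2) (m * y) s y :=
    ((hasDerivWithinAt_pow 2 y).const_mul (m / 2)).congr_deriv (by push_cast; ring)
  linarith [concaveOn_le_tangent hconc hx hy (hfy.add hsq)]

theorem abs_rpow_le_rpow_sub_two_mul_sq {t B q : ℝ} (ht : |t| ≤ B) (hq : 2 ≤ q) :
    |t| ^ q ≤ B ^ (q - 2) * t ^ 2 :=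
  calc |t| ^ q = |t| ^ (q - 2) * t ^ 2 := by
        rw [← sq_abs t, ← rpow_two, ← rpow_add_of_nonneg (abs_nonneg t) (by linarith) zero_le_two,
          sub_add_cancel]
    _ ≤ B ^ (q - 2) * t ^ 2 := by
        gcongr

section EnergyDensity

variable {γ ρbar M ρ : ℝ}

/-- The potential energy density `G(ρ)` of the pressure law `p = ρ ^ γ`, relative to the reference
density `ρbar`. -/
noncomputable def potentialEnergyDensity (γ ρbar ρ : ℝ) : ℝ :=
  (ρ ^ γ - ρ * ρbar ^ (γ - 1)) / (γ - 1) + (ρbar - ρ) * ρbar ^ (γ - 1)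

theorem continuous_potentialEnergyDensity (hγ : 0 ≤ γ) :
    Continuous (potentialEnergyDensity γ ρbar) := by
  have := continuous_rpow_const hγ
  unfold potentialEnergyDensity
  fun_prop

theorem potentialEnergyDensity_eq_tangent_gap (hγ : 1 < γ) (hρbar : 0 < ρbar) (hρ : 0 ≤ ρ) :
    potentialEnergyDensity γ ρbar ρ = γ / (γ - 1) * ρbar ^ (γ - 1) *
      ((ρbar ^ γ) ^ γ⁻¹ + γ⁻¹ * (ρbar ^ γ) ^ (γ⁻¹ - 1) * (ρ ^ γ - ρbar ^ γ) - (ρ ^ γ) ^ γ⁻¹) := by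
  have hγ₀ : γ ≠ 0 := by positivity
  have hγ₁ : γ - 1 ≠ 0 := sub_ne_zero.2 hγ.ne'
  have htangent : (ρbar ^ γ) ^ (γ⁻¹ - 1) = (ρbar ^ (γ - 1))⁻¹ := by
    rw [← rpow_mul hρbar.le, ← rpow_neg hρbar.le]
    congr 1
    field_simp
    ring
  have hpow : ρbar ^ γ = ρbar * ρbar ^ (γ - 1) := by
    rw [rpow_sub_one hρbar.ne', mul_div_cancel₀ _ hρbar.ne']
  rw [htangent, rpow_rpow_inv hρbar.le hγ₀, rpow_rpow_inv hρ hγ₀, hpow, potentialEnergyDensity]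
  field_simp
  ring

theorem mul_sq_pressure_sub_le_potentialEnergyDensity (hγ : 1 < γ) (hρbar : 0 < ρbar)
    (hM : ρbar ≤ M) (hρ : ρ ∈ Icc 0 M) :
    ρbar ^ (γ - 1) * M ^ (1 - 2 * γ) / (2 * γ) * (ρ ^ γ - ρbar ^ γ) ^ 2 ≤
      potentialEnergyDensity γ ρbar ρ := by
  have hγ₀ : 0 < γ := by linarith
  have hγ₁ : 0 < γ - 1 := by linarith
  have hpressure {r : ℝ} (hr : r ∈ Icc 0 M) : r ^ γ ∈ Icc 0 (M ^ γ) :=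
    ⟨rpow_nonneg hr.1 γ, rpow_le_rpow hr.1 hr.2 hγ₀.le⟩
  have hgap := strongConcaveOn_le_tangent
    (strongConcaveOn_rpow_Icc (inv_nonneg.2 hγ₀.le) (inv_le_one_of_one_le₀ hγ.le))
    (hpressure hρ) (hpressure ⟨hρbar.le, hM⟩)
    (hasDerivAt_rpow_const (.inl (rpow_pos_of_pos hρbar γ).ne')).hasDerivWithinAt
  have hexp : (M ^ γ) ^ (γ⁻¹ - 2) = M ^ (1 - 2 * γ) := by
    rw [← rpow_mul (hρbar.le.trans hM)]
    congr 1
    field_simp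
  rw [hexp] at hgap
  calc ρbar ^ (γ - 1) * M ^ (1 - 2 * γ) / (2 * γ) * (ρ ^ γ - ρbar ^ γ) ^ 2
      = γ / (γ - 1) * ρbar ^ (γ - 1) *
          (γ⁻¹ * (1 - γ⁻¹) * M ^ (1 - 2 * γ) / 2 * (ρ ^ γ - ρbar ^ γ) ^ 2) := by
        field_simp
    _ ≤ γ / (γ - 1) * ρbar ^ (γ - 1) * ((ρbar ^ γ) ^ γ⁻¹ +
          γ⁻¹ * (ρbar ^ γ) ^ (γ⁻¹ - 1) * (ρ ^ γ - ρbar ^ γ) - (ρ ^ γ) ^ γ⁻¹) := by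
        gcongr
        linarith
    _ = potentialEnergyDensity γ ρbar ρ :=
        (potentialEnergyDensity_eq_tangent_gap hγ hρbar hρ.1).symm

theorem potentialEnergyDensity_nonneg (hγ : 1 < γ) (hρbar : 0 < ρbar) (hρ : 0 ≤ ρ) :
    0 ≤ potentialEnergyDensity γ ρbar ρ := by
  have : 0 ≤ max ρ ρbar := hρ.trans (le_max_left ρ ρbar)
  exact le_trans (by positivity) (mul_sq_pressure_sub_le_potentialEnergyDensity hγ hρbar
    (le_max_right ρ ρbar) ⟨hρ, le_max_left ρ ρbar⟩)

theorem exists_abs_pressure_sub_rpow_le {q : ℝ} (hγ : 1 < γ) (hρbar : 0 < ρbar) (hq : 2 ≤ q)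
    (M : ℝ) :
    ∃ K : ℝ, 0 < K ∧ ∀ ρ ∈ Icc 0 M,
      |ρ ^ γ - ρbar ^ γ| ^ q ≤ K * potentialEnergyDensity γ ρbar ρ := by
  set N := max M ρbar
  have : 0 < N := hρbar.trans_le (le_max_right M ρbar)
  set κ := ρbar ^ (γ - 1) * N ^ (1 - 2 * γ) / (2 * γ)
  have hκ₀ : 0 < κ := by positivity
  refine ⟨(N ^ γ) ^ (q - 2) / κ, by positivity, fun ρ hρ ↦ ?_⟩
  have hρN : ρ ∈ Icc 0 N := ⟨hρ.1, hρ.2.trans (le_max_left M ρbar)⟩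
  have hdev : |ρ ^ γ - ρbar ^ γ| ≤ N ^ γ :=
    abs_sub_le_of_nonneg_of_le (rpow_nonneg hρ.1 γ)
      (rpow_le_rpow hρ.1 hρN.2 (by linarith)) (rpow_nonneg hρbar.le γ)
      (rpow_le_rpow hρbar.le (le_max_right M ρbar) (by linarith))
  have hsq : (ρ ^ γ - ρbar ^ γ) ^ 2 ≤ potentialEnergyDensity γ ρbar ρ / κ :=
    (le_div_iff₀' hκ₀).2
      (mul_sq_pressure_sub_le_potentialEnergyDensity hγ hρbar (le_max_right M ρbar) hρN)
  calc |ρ ^ γ - ρbar ^ γ| ^ q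
      ≤ (N ^ γ) ^ (q - 2) * (ρ ^ γ - ρbar ^ γ) ^ 2 := abs_rpow_le_rpow_sub_two_mul_sq hdev hq
    _ ≤ (N ^ γ) ^ (q - 2) * (potentialEnergyDensity γ ρbar ρ / κ) := by gcongr
    _ = (N ^ γ) ^ (q - 2) / κ * potentialEnergyDensity γ ρbar ρ := by ring

end EnergyDensity

section Energy

universe u

variable {Ω : Type u} [MeasurableSpace Ω] {μ : Measure Ω} {γ ρbar M : ℝ} {ρ : Ω → ℝ}

theorem integrable_potentialEnergyDensity [IsFiniteMeasure μ] (hγ : 0 ≤ γ)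
    (hρ : AEMeasurable ρ μ) (hρM : ∀ᵐ x ∂μ, ρ x ∈ Icc 0 M) :
    Integrable (fun x ↦ potentialEnergyDensity γ ρbar (ρ x)) μ := by
  have hcont := continuous_potentialEnergyDensity (ρbar := ρbar) hγ
  obtain ⟨D, hD⟩ := isCompact_Icc.exists_bound_of_continuousOn hcont.continuousOn
  exact .of_bound (hcont.measurable.comp_aemeasurable hρ).aestronglyMeasurable D
    (hρM.mono fun x hx ↦ hD (ρ x) hx)

theorem integral_potentialEnergyDensity_nonneg (hγ : 1 < γ) (hρbar : 0 < ρbar)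
    (hρ : ∀ᵐ x ∂μ, 0 ≤ ρ x) : 0 ≤ ∫ x, potentialEnergyDensity γ ρbar (ρ x) ∂μ :=
  integral_nonneg_of_ae (hρ.mono fun _ hx ↦ potentialEnergyDensity_nonneg hγ hρbar hx)

theorem pressure_Lq_bound_general (γ ρbar M q : ℝ) (hγ : 1 < γ) (hρbar : 0 < ρbar) (hq : 2 ≤ q) :
    ∃ C : ℝ, 0 < C ∧ ∀ {Ω : Type u} [MeasurableSpace Ω] {μ : Measure Ω} {ρ : Ω → ℝ},
      AEMeasurable ρ μ → (∀ᵐ x ∂μ, ρ x ∈ Icc 0 M) →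
      Integrable (fun x ↦ potentialEnergyDensity γ ρbar (ρ x)) μ →
      Integrable (fun x ↦ |ρ x ^ γ - ρbar ^ γ| ^ q) μ ∧
        (∫ x, |ρ x ^ γ - ρbar ^ γ| ^ q ∂μ) ^ (1 / q) ≤
          C * (∫ x, potentialEnergyDensity γ ρbar (ρ x) ∂μ) ^ (1 / q) := by
  obtain ⟨K, hK, hpointwise⟩ := exists_abs_pressure_sub_rpow_le hγ hρbar hq M
  refine ⟨K ^ (1 / q), rpow_pos_of_pos hK _, fun {Ω} _ {μ ρ} hρ hρM hG ↦ ?_⟩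
  have hdev_le : ∀ᵐ x ∂μ, |ρ x ^ γ - ρbar ^ γ| ^ q ≤ K * potentialEnergyDensity γ ρbar (ρ x) :=
    hρM.mono fun x hx ↦ hpointwise (ρ x) hx
  have hmeas : AEMeasurable (fun x ↦ |ρ x ^ γ - ρbar ^ γ| ^ q) μ :=
    (((hρ.pow_const γ).sub_const (ρbar ^ γ)).abs).pow_const q
  have hdev : Integrable (fun x ↦ |ρ x ^ γ - ρbar ^ γ| ^ q) μ :=
    (hG.const_mul K).mono' hmeas.aestronglyMeasurable (hdev_le.mono fun x hx ↦ by
      rwa [norm_of_nonneg (by positivity)])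
  have hG₀ := integral_potentialEnergyDensity_nonneg hγ hρbar (hρM.mono fun _ hx ↦ hx.1)
  refine ⟨hdev, ?_⟩
  calc (∫ x, |ρ x ^ γ - ρbar ^ γ| ^ q ∂μ) ^ (1 / q)
      ≤ (∫ x, K * potentialEnergyDensity γ ρbar (ρ x) ∂μ) ^ (1 / q) := by
        gcongr ?_ ^ (1 / q)
        exact integral_mono_ae hdev (hG.const_mul K) hdev_le
    _ = K ^ (1 / q) * (∫ x, potentialEnergyDensity γ ρbar (ρ x) ∂μ) ^ (1 / q) := by
        rw [integral_const_mul, mul_rpow hK.le hG₀]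

end Energy

/-- Lemma 3.1 (bounded-density version): on the unit disc `Ω ⊂ ℝ²`, for densities
`0 ≤ ρ ≤ M` a.e. with potential energy `E = ∫_Ω G(ρ) ≤ 1`, the pressure deviation
satisfies `‖ρ^γ − ρ̄^γ‖_{L^q(Ω)} ≤ C E^{1/(qγ)}` for `q ∈ [2,6]`. -/
theorem pressure_Lq_bound
    (γ ρbar M q : ℝ) (hγ : 1 < γ) (hρbar : 0 < ρbar) (hM : ρbar ≤ M)
    (hq : q ∈ Set.Icc (2:ℝ) 6) :
    ∃ C : ℝ, 0 < C ∧
      ∀ ρ : EuclideanSpace ℝ (Fin 2) → ℝ, Measurable ρ →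
        (∀ᵐ x ∂(volume.restrict (Metric.ball (0 : EuclideanSpace ℝ (Fin 2)) 1)),
          ρ x ∈ Set.Icc (0:ℝ) M) →
        (∫ x in Metric.ball (0 : EuclideanSpace ℝ (Fin 2)) 1,
            ((ρ x ^ γ - ρ x * ρbar ^ (γ - 1)) / (γ - 1) +
              (ρbar - ρ x) * ρbar ^ (γ - 1))) ≤ 1 →
        (∫ x in Metric.ball (0 : EuclideanSpace ℝ (Fin 2)) 1,
            |ρ x ^ γ - ρbar ^ γ| ^ q) ^ (1 / q) ≤
          C * (∫ x in Metric.ball (0 : EuclideanSpace ℝ (Fin 2)) 1,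
            ((ρ x ^ γ - ρ x * ρbar ^ (γ - 1)) / (γ - 1) +
              (ρbar - ρ x) * ρbar ^ (γ - 1))) ^ (1 / (q * γ)) := by
  obtain ⟨C, hC, hbound⟩ := pressure_Lq_bound_general γ ρbar M q hγ hρbar hq.1
  refine ⟨C, hC, fun ρ hρ hρM hE ↦ ?_⟩
  have : IsFiniteMeasure (volume.restrict (Metric.ball (0 : EuclideanSpace ℝ (Fin 2)) 1)) :=
    isFiniteMeasure_restrict.2 measure_ball_lt_top.ne
  have hq₀ : 0 < q := zero_lt_two.trans_le hq.1
  have hexp : 1 / (q * γ) ≤ 1 / q :=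
    one_div_le_one_div_of_le hq₀ (le_mul_of_one_le_right hq₀.le hγ.le)
  have hint := integrable_potentialEnergyDensity (ρbar := ρbar) (by positivity) hρ.aemeasurable hρM
  have hE₀ := integral_potentialEnergyDensity_nonneg hγ hρbar (hρM.mono fun _ hx ↦ hx.1)
  exact (hbound hρ.aemeasurable hρM hint).2.trans (mul_le_mul_of_nonneg_left
    (rpow_le_rpow_of_exponent_ge' hE₀ hE (by positivity) hexp) hC.le)
end

section
/- Let Ω be the open unit disc in ℝ² with Lebesgue measure, let γ > 1, ρ̄ > 0 and M ≥ ρ̄. Define G(ρ) = (ρ^γ − ρ ρ̄^{γ−1})/(γ−1) + (ρ̄ − ρ)·ρ̄^{γ−1} for ρ ≥ 0. Then there exists a constant C > 0, depending only on γ, ρ̄ and M, such that for every measurable function ρ : Ω → ℝ with 0 ≤ ρ(x) ≤ M for almost every x ∈ Ω, one has ∫_Ω |ρ(x)^γ − ρ̄^γ| dx ≤ C·(∫_Ω G(ρ(x)) dx)^{1/2}; in particular the average pressure satisfies |⨍_Ω ρ(x)^γ dx − ρ̄^γ| ≤ C·(∫_Ω G(ρ(x)) dx)^{1/2}. -/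
open MeasureTheory

/-!
Up to the factor `1 / (γ - 1)`, `G` is the Bregman divergence of the pressure `s ↦ s ^ γ` at `ρ̄`.
For large `K` the function `s ↦ K s ^ γ - (s ^ γ - ρ̄ ^ γ) ^ 2` is convex on `[0, M]`, so it lies
above its tangent line at `ρ̄`, which says exactly that `K` times the Bregman divergence dominates
`(s ^ γ - ρ̄ ^ γ) ^ 2`. The estimate follows by averaging this pointwise bound and applying Jensen's
inequality to the square.
-/

/-- The potential energy density `G` of the pressure law `p(s) = s ^ γ` relative to the reference
density `ρbar`. -/
noncomputable def potentialEnergy (γ ρbar s : ℝ) : ℝ :=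
  (s ^ γ - s * ρbar ^ (γ - 1)) / (γ - 1) + (ρbar - s) * ρbar ^ (γ - 1)

section Pointwise

theorem tangent_le_of_convexOn {S : Set ℝ} {f : ℝ → ℝ} {f' x y : ℝ} (hf : ConvexOn ℝ S f)
    (hx : x ∈ S) (hy : y ∈ S) (hf' : HasDerivWithinAt f f' S x) :
    f x + f' * (y - x) ≤ f y := by
  rcases lt_trichotomy x y with hxy | rfl | hyx
  · have h := hf.le_slope_of_hasDerivWithinAt hx hy hxy hf'
    rw [slope_def_field, le_div_iff₀ (sub_pos.2 hxy)] at h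
    linarith
  · simp
  · have h := hf.slope_le_of_hasDerivWithinAt hy hx hyx hf'
    rw [slope_def_field, div_le_iff₀ (sub_pos.2 hyx)] at h
    linarith

theorem convexOn_const_mul_rpow_sub_rpow {A M p q : ℝ} (hp : 0 ≤ p) (hpq : p ≤ q) (hq : 1 ≤ q)
    (hA : q * (q - 1) * M ^ (q - p) ≤ A * (p * (p - 1))) :
    ConvexOn ℝ (Set.Icc 0 M) fun s ↦ A * s ^ p - s ^ q := by
  have hderiv (r s : ℝ) (hs : 0 < s) : HasDerivAt (fun s : ℝ ↦ s ^ r) (r * s ^ (r - 1)) s :=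
    Real.hasDerivAt_rpow_const (.inl hs.ne')
  have hpos {s : ℝ} (hs : s ∈ interior (Set.Icc 0 M)) : 0 < s := by
    rw [interior_Icc] at hs
    exact hs.1
  refine convexOn_of_hasDerivWithinAt2_nonneg (convex_Icc 0 M)
    (f' := fun s ↦ A * (p * s ^ (p - 1)) - q * s ^ (q - 1))
    (f'' := fun s ↦ A * (p * ((p - 1) * s ^ (p - 1 - 1))) - q * ((q - 1) * s ^ (q - 1 - 1)))
    (((Real.continuous_rpow_const hp).const_mul A).sub
      (Real.continuous_rpow_const (by linarith))).continuousOn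
    (fun s hs ↦ (((hderiv p s (hpos hs)).const_mul A).sub
      (hderiv q s (hpos hs))).hasDerivWithinAt)
    (fun s hs ↦ ((((hderiv (p - 1) s (hpos hs)).const_mul p).const_mul A).sub
      ((hderiv (q - 1) s (hpos hs)).const_mul q)).hasDerivWithinAt)
    fun s hs ↦ ?_
  have hs₀ : 0 < s := hpos hs
  have hsM : s ≤ M := (interior_subset hs).2
  have hpow : s ^ (q - 1 - 1) = s ^ (q - p) * s ^ (p - 1 - 1) := by
    rw [← Real.rpow_add hs₀]
    ring_nf
  have hcoeff : q * (q - 1) * s ^ (q - p) ≤ A * (p * (p - 1)) :=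
    (mul_le_mul_of_nonneg_left (Real.rpow_le_rpow hs₀.le hsM (sub_nonneg.2 hpq))
      (mul_nonneg (by linarith) (by linarith))).trans hA
  calc 0 ≤ (A * (p * (p - 1)) - q * (q - 1) * s ^ (q - p)) * s ^ (p - 1 - 1) :=
        mul_nonneg (sub_nonneg.2 hcoeff) (Real.rpow_nonneg hs₀.le _)
    _ = _ := by rw [hpow]; ring

variable {γ M b s : ℝ}

theorem sq_rpow_sub_rpow_le_bregman (hγ : 1 < γ) (hb : b ∈ Set.Icc 0 M) (hs : s ∈ Set.Icc 0 M) :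
    (s ^ γ - b ^ γ) ^ 2 ≤
      2 * (2 * γ - 1) * M ^ γ / (γ - 1) * (s ^ γ - b ^ γ - γ * b ^ (γ - 1) * (s - b)) := by
  have hγ₁ : 0 < γ - 1 := sub_pos.2 hγ
  set K := 2 * (2 * γ - 1) * M ^ γ / (γ - 1) with hK
  -- Up to a constant, this is `K * s ^ γ - (s ^ γ - b ^ γ) ^ 2` expanded.
  have hconv : ConvexOn ℝ (Set.Icc 0 M) fun s ↦ (K + 2 * b ^ γ) * s ^ γ - s ^ (2 * γ) := by
    refine convexOn_const_mul_rpow_sub_rpow (by linarith) (by linarith) (by linarith) ?_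
    calc 2 * γ * (2 * γ - 1) * M ^ (2 * γ - γ) = K * (γ * (γ - 1)) := by
          rw [hK, show 2 * γ - γ = γ by ring]
          field_simp
      _ ≤ (K + 2 * b ^ γ) * (γ * (γ - 1)) := by
          gcongr
          linarith [Real.rpow_nonneg hb.1 γ]
  have hderiv : HasDerivAt (fun s : ℝ ↦ (K + 2 * b ^ γ) * s ^ γ - s ^ (2 * γ))
      ((K + 2 * b ^ γ) * (γ * b ^ (γ - 1)) - 2 * γ * b ^ (2 * γ - 1)) b :=
    ((Real.hasDerivAt_rpow_const (.inr hγ.le)).const_mul _).sub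
      (Real.hasDerivAt_rpow_const (.inr (by linarith)))
  have htangent := tangent_le_of_convexOn hconv hb hs hderiv.hasDerivWithinAt
  have hpow_sub : b ^ (2 * γ - 1) = b ^ γ * b ^ (γ - 1) := by
    rw [← Real.rpow_add' hb.1 (by linarith)]
    ring_nf
  have hpow_two (t : ℝ) (ht : 0 ≤ t) : t ^ (2 * γ) = (t ^ γ) ^ 2 := by
    rw [mul_comm, Real.rpow_mul ht, Real.rpow_two]
  rw [hpow_sub, hpow_two b hb.1, hpow_two s hs.1] at htangent
  linarith

theorem sub_one_mul_potentialEnergy (hγ : 1 < γ) (hb : 0 ≤ b) :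
    (γ - 1) * potentialEnergy γ b s = s ^ γ - b ^ γ - γ * b ^ (γ - 1) * (s - b) := by
  have hpow : b ^ γ = b * b ^ (γ - 1) := by
    rw [← Real.rpow_one_add' hb (by linarith)]
    ring_nf
  rw [potentialEnergy, hpow, mul_add, mul_div_cancel₀ _ (sub_pos.2 hγ).ne']
  ring

theorem sq_rpow_sub_rpow_le_potentialEnergy (hγ : 1 < γ) (hb : b ∈ Set.Icc 0 M)
    (hs : s ∈ Set.Icc 0 M) :
    (s ^ γ - b ^ γ) ^ 2 ≤ 2 * (2 * γ - 1) * M ^ γ * potentialEnergy γ b s := by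
  have h := sq_rpow_sub_rpow_le_bregman hγ hb hs
  rwa [← sub_one_mul_potentialEnergy hγ hb.1, ← mul_assoc,
    div_mul_cancel₀ _ (sub_pos.2 hγ).ne'] at h

theorem continuous_potentialEnergy (hγ : 0 ≤ γ) : Continuous (potentialEnergy γ b) := by
  have := Real.continuous_rpow_const hγ
  unfold potentialEnergy
  fun_prop

end Pointwise

section Average

variable {X : Type*} [MeasurableSpace X] {μ : Measure X} [IsFiniteMeasure μ]

theorem integrable_comp_of_ae_mem_isCompact {Y E : Type*} [TopologicalSpace Y]
    [NormedAddCommGroup E] {K : Set Y} {f : Y → E} {u : X → Y} (hf : Continuous f)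
    (hK : IsCompact K) (hu : AEStronglyMeasurable u μ) (huK : ∀ᵐ x ∂μ, u x ∈ K) :
    Integrable (fun x ↦ f (u x)) μ := by
  obtain ⟨B, hB⟩ := hK.exists_bound_of_continuousOn hf.continuousOn
  exact .of_bound (hf.comp_aestronglyMeasurable hu) B (huK.mono fun x hx ↦ hB _ hx)

variable [NeZero μ]

theorem average_abs_le_sqrt_average {f g : X → ℝ} (hf : AEStronglyMeasurable f μ)
    (hg : Integrable g μ) (hfg : ∀ᵐ x ∂μ, f x ^ 2 ≤ g x) : ⨍ x, |f x| ∂μ ≤ √(⨍ x, g x ∂μ) := by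
  have hf_sq : Integrable (fun x ↦ f x ^ 2) μ :=
    hg.mono' (hf.pow 2) (by simpa only [Real.norm_eq_abs, abs_sq] using hfg)
  have hf_int : Integrable f μ := ((memLp_two_iff_integrable_sq hf).2 hf_sq).integrable one_le_two
  refine Real.le_sqrt_of_sq_le ?_
  calc (⨍ x, |f x| ∂μ) ^ 2 ≤ ⨍ x, |f x| ^ 2 ∂μ :=
        even_two.convexOn_pow.map_average_le (continuous_pow 2).continuousOn isClosed_univ
          (by simp) hf_int.abs (by simpa only [Function.comp_def, sq_abs] using hf_sq)
    _ = ⨍ x, f x ^ 2 ∂μ := by simp only [sq_abs]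
    _ ≤ ⨍ x, g x ∂μ := integral_mono_ae hf_sq.to_average hg.to_average
        (Measure.ae_smul_measure hfg _)

theorem abs_average_sub_const_le {f : X → ℝ} (hf : Integrable f μ) (c : ℝ) :
    |(⨍ x, f x ∂μ) - c| ≤ ⨍ x, |f x - c| ∂μ := by
  have hsub : (⨍ x, f x ∂μ) - c = ⨍ x, (f x - c) ∂μ := by
    nth_rw 1 [← average_const μ c]
    exact (integral_sub hf.to_average (integrable_const c).to_average).symm
  rw [hsub]
  exact abs_integral_le_integral_abs

theorem average_abs_rpow_sub_le_sqrt_potentialEnergy {γ M b : ℝ} {ρ : X → ℝ} (hγ : 1 < γ)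
    (hb : b ∈ Set.Icc 0 M) (hρ : AEMeasurable ρ μ) (hρM : ∀ᵐ x ∂μ, ρ x ∈ Set.Icc 0 M) :
    ⨍ x, |ρ x ^ γ - b ^ γ| ∂μ ≤
      √(2 * (2 * γ - 1) * M ^ γ * ⨍ x, potentialEnergy γ b (ρ x) ∂μ) := by
  have hG : Integrable (fun x ↦ potentialEnergy γ b (ρ x)) μ :=
    integrable_comp_of_ae_mem_isCompact (continuous_potentialEnergy (by linarith)) isCompact_Icc
      hρ.aestronglyMeasurable hρM
  have hbound := average_abs_le_sqrt_average
    ((hρ.pow_const γ).sub_const (b ^ γ)).aestronglyMeasurable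
    (hG.const_mul (2 * (2 * γ - 1) * M ^ γ))
    (hρM.mono fun x hx ↦ sq_rpow_sub_rpow_le_potentialEnergy hγ hb hx)
  have hconst : ⨍ x, 2 * (2 * γ - 1) * M ^ γ * potentialEnergy γ b (ρ x) ∂μ =
      2 * (2 * γ - 1) * M ^ γ * ⨍ x, potentialEnergy γ b (ρ x) ∂μ := integral_const_mul _ _
  rwa [hconst] at hbound

variable (μ) in
theorem average_pressure_bound_general {γ M : ℝ} (hγ : 1 < γ) (hM : 0 < M) :
    ∃ C : ℝ, 0 < C ∧ ∀ ρbar ∈ Set.Icc 0 M, ∀ ρ : X → ℝ, AEMeasurable ρ μ →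
      (∀ᵐ x ∂μ, ρ x ∈ Set.Icc 0 M) →
      ∫ x, |ρ x ^ γ - ρbar ^ γ| ∂μ ≤
        C * (∫ x, potentialEnergy γ ρbar (ρ x) ∂μ) ^ ((1 : ℝ) / 2) ∧
      |(⨍ x, ρ x ^ γ ∂μ) - ρbar ^ γ| ≤
        C * (∫ x, potentialEnergy γ ρbar (ρ x) ∂μ) ^ ((1 : ℝ) / 2) := by
  have hγ' : 0 < 2 * γ - 1 := by linarith
  set V := μ.real Set.univ
  set K := 2 * (2 * γ - 1) * M ^ γ
  have hV₀ : 0 < V := measureReal_univ_pos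
  refine ⟨max V 1 * √(K / V), by positivity, fun ρbar hρbar ρ hρ hρM ↦ ?_⟩
  rw [← Real.sqrt_eq_rpow, mul_assoc]
  have haverage : ⨍ x, |ρ x ^ γ - ρbar ^ γ| ∂μ ≤
      √(K / V) * √(∫ x, potentialEnergy γ ρbar (ρ x) ∂μ) := by
    have h := average_abs_rpow_sub_le_sqrt_potentialEnergy hγ hρbar hρ hρM
    rwa [average_eq _ fun x ↦ potentialEnergy γ ρbar (ρ x), smul_eq_mul, ← mul_assoc,
      ← div_eq_mul_inv, Real.sqrt_mul (by positivity)] at h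
  have hρ_int : Integrable (fun x ↦ ρ x ^ γ) μ :=
    integrable_comp_of_ae_mem_isCompact (Real.continuous_rpow_const (by linarith)) isCompact_Icc
      hρ.aestronglyMeasurable hρM
  constructor
  · rw [← measure_smul_average, smul_eq_mul]
    exact mul_le_mul (le_max_left V 1) haverage (integral_nonneg fun _ ↦ abs_nonneg _)
      (by positivity)
  · calc |(⨍ x, ρ x ^ γ ∂μ) - ρbar ^ γ| ≤ ⨍ x, |ρ x ^ γ - ρbar ^ γ| ∂μ :=
          abs_average_sub_const_le hρ_int _
      _ ≤ _ := haverage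
      _ ≤ _ := le_mul_of_one_le_left (by positivity) (le_max_right V 1)

end Average

/-- Average-pressure deviation bound on the unit disc `Ω ⊂ ℝ²`: for densities
`0 ≤ ρ ≤ M` a.e., `∫_Ω |ρ^γ − ρ̄^γ| ≤ C (∫_Ω G(ρ))^{1/2}` and in particular
`|⨍_Ω ρ^γ − ρ̄^γ| ≤ C (∫_Ω G(ρ))^{1/2}`. -/
theorem average_pressure_bound
    (γ ρbar M : ℝ) (hγ : 1 < γ) (hρbar : 0 < ρbar) (hM : ρbar ≤ M) :
    ∃ C : ℝ, 0 < C ∧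
      ∀ ρ : EuclideanSpace ℝ (Fin 2) → ℝ, Measurable ρ →
        (∀ᵐ x ∂(volume.restrict (Metric.ball (0 : EuclideanSpace ℝ (Fin 2)) 1)),
          ρ x ∈ Set.Icc (0:ℝ) M) →
        (∫ x in Metric.ball (0 : EuclideanSpace ℝ (Fin 2)) 1,
            |ρ x ^ γ - ρbar ^ γ|) ≤
          C * (∫ x in Metric.ball (0 : EuclideanSpace ℝ (Fin 2)) 1,
            ((ρ x ^ γ - ρ x * ρbar ^ (γ - 1)) / (γ - 1) +
              (ρbar - ρ x) * ρbar ^ (γ - 1))) ^ ((1:ℝ) / 2) ∧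
        |(⨍ x in Metric.ball (0 : EuclideanSpace ℝ (Fin 2)) 1, ρ x ^ γ) - ρbar ^ γ| ≤
          C * (∫ x in Metric.ball (0 : EuclideanSpace ℝ (Fin 2)) 1,
            ((ρ x ^ γ - ρ x * ρbar ^ (γ - 1)) / (γ - 1) +
              (ρbar - ρ x) * ρbar ^ (γ - 1))) ^ ((1:ℝ) / 2) := by
  have : NeZero (volume (Metric.ball (0 : EuclideanSpace ℝ (Fin 2)) 1)) :=
    ⟨(Metric.measure_ball_pos volume 0 one_pos).ne'⟩
  have : Fact (volume (Metric.ball (0 : EuclideanSpace ℝ (Fin 2)) 1) < ⊤) := ⟨measure_ball_lt_top⟩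
  obtain ⟨C, hC, hbound⟩ := average_pressure_bound_general
    (volume.restrict (Metric.ball (0 : EuclideanSpace ℝ (Fin 2)) 1)) hγ (hρbar.trans_le hM)
  exact ⟨C, hC, fun ρ hρ hρM ↦ hbound ρbar ⟨hρbar.le, hM⟩ ρ hρ.aemeasurable hρM⟩
end
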